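/- arXiv:0712.3531 — 2 statements merged into one kernel-verified Lean document; each statement's English description precedes it below -/
import Mathlib

section
/- Let ε, a, b ∈ ℝ, set c := a + b, and suppose γ, A : ℝ → ℝ are differentiable with A(τ) > 0 for all τ, satisfying the reduced planar system γ'(τ) = 2·(ε − c·A(τ))·γ(τ) and A'(τ) = 2·((ε − a·A(τ))·A(τ) − b·γ(τ)²). Then the ratio s(τ) := γ(τ)/A(τ) is differentiable and satisfies s'(τ) = −2·b·A(τ)·s(τ)·(1 − s(τ)²) for all τ. -/
/-!
The equation for `A` can be written as `A' = qA` with growth rate `q = 2(ε - aA - bAs²)`, where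
`s = γ/A`, while `γ' = pγ` with `p = 2(ε - (a + b)A)`. The quotient of two such functions grows at
the rate `p - q`, in which `ε` and `a` cancel, leaving `-2bA(1 - s²)`.
-/

variable {𝕜 𝕂 : Type*} [NontriviallyNormedField 𝕜] [NontriviallyNormedField 𝕂] [NormedAlgebra 𝕜 𝕂]

theorem hasDerivAt_div_of_hasDerivAt_mul_self {f g : 𝕜 → 𝕂} {p q : 𝕂} {t : 𝕜}
    (hf : HasDerivAt f (p * f t) t) (hg : HasDerivAt g (q * g t) t) (hgt : g t ≠ 0) :
    HasDerivAt (fun s => f s / g s) ((p - q) * (f t / g t)) t := by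
  refine (hf.fun_div hg hgt).congr_deriv ?_
  field_simp

theorem stmt_16_general {ε a b : 𝕂} {γ A : 𝕜 → 𝕂} {τ : 𝕜} (hAτ : A τ ≠ 0)
    (hγ : HasDerivAt γ (2 * (ε - (a + b) * A τ) * γ τ) τ)
    (hA : HasDerivAt A (2 * ((ε - a * A τ) * A τ - b * γ τ ^ 2)) τ) :
    HasDerivAt (fun s => γ s / A s)
      (-2 * b * A τ * (γ τ / A τ) * (1 - (γ τ / A τ) ^ 2)) τ := by
  have hA_growth : HasDerivAt A (2 * (ε - a * A τ - b * A τ * (γ τ / A τ) ^ 2) * A τ) τ :=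
    hA.congr_deriv (by field_simp)
  exact (hasDerivAt_div_of_hasDerivAt_mul_self hγ hA_growth hAτ).congr_deriv (by ring)

/-- For solutions of the reduced planar system
`γ' = 2(ε - cA)γ`, `A' = 2((ε - aA)A - bγ²)` with `c = a + b` and `A > 0`, the ratio
`s = γ/A` satisfies `s' = -2bA s (1 - s²)`. -/
theorem stmt_16 (ε a b : ℝ) (γ A : ℝ → ℝ)
    (hpos : ∀ τ : ℝ, 0 < A τ)
    (hγ : ∀ τ : ℝ, HasDerivAt γ (2 * (ε - (a + b) * A τ) * γ τ) τ)
    (hA : ∀ τ : ℝ, HasDerivAt A (2 * ((ε - a * A τ) * A τ - b * γ τ ^ 2)) τ) :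
    ∀ τ : ℝ, HasDerivAt (fun s => γ s / A s)
      (-2 * b * A τ * (γ τ / A τ) * (1 - (γ τ / A τ) ^ 2)) τ :=
  fun τ => stmt_16_general (hpos τ).ne' (hγ τ) (hA τ)
end

section
/- Let ε > 0, a > 0, b > 0 and set c := a + b. The vector field F(γ, A) := ( 2(ε − cA)γ , 2((ε − aA)A − bγ²) ) on ℝ² is differentiable at each of the two equilibria (±ε/c, ε/c), and the Jacobian matrix of F there (in coordinates (γ, A)) is [[0, ∓2ε], [∓4bε/c, 2ε(b − a)/c]], whose determinant equals −8bε²/c < 0; consequently the linearization at each of these points has two real eigenvalues μ₋ < 0 < μ₊, i.e. the equilibria (±ε/c, ε/c) (corresponding to the unstable, non-PT-symmetric periodic solutions) are saddle points. -/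
/-!
At an equilibrium with `γ ≠ 0` the factor `ε - cA` vanishes, so the Jacobian determinant is minus
the product of the off-diagonal entries, which have the same sign because `bc > 0`. As the
determinant is the constant term of the characteristic polynomial, its negativity makes the
discriminant positive and gives the two real roots a negative product.
-/

open Matrix Module

/-- The reduced planar vector field `F(γ, A)`, on pairs `p = (γ, A)` and with `c = a + b`; its
equilibria correspond to periodic solutions of the original system. -/
def reducedField (ε a b : ℝ) (p : ℝ × ℝ) : ℝ × ℝ :=
  (2 * (ε - (a + b) * p.2) * p.1, 2 * ((ε - a * p.2) * p.2 - b * p.1 ^ 2))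

/-- The Jacobian matrix of `reducedField` at `p = (γ, A)`, rows and columns ordered as `(γ, A)`. -/
def reducedJacobian (ε a b : ℝ) (p : ℝ × ℝ) : Matrix (Fin 2) (Fin 2) ℝ :=
  !![2 * (ε - (a + b) * p.2), -(2 * (a + b) * p.1);
    -(4 * b * p.1), 2 * (ε - 2 * a * p.2)]

/-- The point `(sε/c, ε/c)` with `c = a + b`; for the signs `s = ±1` it is one of the two equilibria
of `reducedField` that correspond to the non-PT-symmetric periodic solutions. -/
noncomputable def asymmetricEquilibrium (ε a b s : ℝ) : ℝ × ℝ :=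
  (s * ε / (a + b), ε / (a + b))

theorem exists_neg_root_and_pos_root_of_const_neg (T : ℝ) {D : ℝ} (hD : D < 0) :
    ∃ x y : ℝ, x < 0 ∧ 0 < y ∧ x ^ 2 - T * x + D = 0 ∧ y ^ 2 - T * y + D = 0 := by
  have hdiscrim : 0 ≤ discrim 1 (-T) D := by
    rw [discrim]
    nlinarith [sq_nonneg T]
  obtain ⟨x, hx⟩ := exists_quadratic_eq_zero one_ne_zero
    ⟨√(discrim 1 (-T) D), (Real.mul_self_sqrt hdiscrim).symm⟩
  have hx_root : x * x - T * x + D = 0 := by linear_combination hx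
  obtain ⟨y, hy_root, -, hxy⟩ := vieta_formula_quadratic hx_root
  rw [← sq] at hx_root hy_root
  rcases mul_neg_iff.1 (hxy.trans_lt hD) with ⟨hx_pos, hy_neg⟩ | ⟨hx_neg, hy_pos⟩
  · exact ⟨y, x, hy_neg, hx_pos, hy_root, hx_root⟩
  · exact ⟨x, y, hx_neg, hy_pos, hx_root, hy_root⟩

theorem hasFDerivAt_reducedField (ε a b : ℝ) (p : ℝ × ℝ) :
    HasFDerivAt (reducedField ε a b)
      (toLin (Basis.finTwoProd ℝ) (Basis.finTwoProd ℝ)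
        (reducedJacobian ε a b p)).toContinuousLinearMap p := by
  have hγ : HasFDerivAt Prod.fst (ContinuousLinearMap.fst ℝ ℝ ℝ) p := hasFDerivAt_fst
  have hA : HasFDerivAt Prod.snd (ContinuousLinearMap.snd ℝ ℝ ℝ) p := hasFDerivAt_snd
  have hF₁ := (((hA.const_mul (a + b)).const_sub ε).const_mul 2).mul hγ
  have hF₂ := ((((hA.const_mul a).const_sub ε).mul hA).sub ((hγ.pow 2).const_mul b)).const_mul 2
  rw [reducedJacobian, toLin_finTwoProd_toContinuousLinearMap]
  refine (hF₁.prodMk hF₂).congr_fderiv ?_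
  congr 1 <;> module

section AsymmetricEquilibrium

variable {a b : ℝ}

theorem reducedJacobian_asymmetricEquilibrium (ε s : ℝ) (hc : a + b ≠ 0) :
    reducedJacobian ε a b (asymmetricEquilibrium ε a b s) =
      !![0, -(s * 2 * ε); -(s * 4 * b * ε / (a + b)), 2 * ε * (b - a) / (a + b)] := by
  have h₁₁ : 2 * (ε - (a + b) * (ε / (a + b))) = 0 := by
    rw [mul_div_cancel₀ ε hc, sub_self, mul_zero]
  have h₁₂ : 2 * (a + b) * (s * ε / (a + b)) = s * 2 * ε := by field_simp
  have h₂₁ : 4 * b * (s * ε / (a + b)) = s * 4 * b * ε / (a + b) := by ring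
  have h₂₂ : 2 * (ε - 2 * a * (ε / (a + b))) = 2 * ε * (b - a) / (a + b) := by
    field_simp
    ring
  rw [reducedJacobian, asymmetricEquilibrium, h₁₁, h₁₂, h₂₁, h₂₂]

theorem det_reducedJacobian_asymmetricEquilibrium (ε : ℝ) {s : ℝ} (hc : a + b ≠ 0)
    (hs : s ^ 2 = 1) :
    (reducedJacobian ε a b (asymmetricEquilibrium ε a b s)).det =
      -(8 * b * ε ^ 2 / (a + b)) := by
  rw [reducedJacobian_asymmetricEquilibrium ε s hc, det_fin_two_of]
  linear_combination (-(8 * b * ε ^ 2 / (a + b))) * hs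

end AsymmetricEquilibrium

theorem stmt_19_general {ε a b s : ℝ} (hε : ε ≠ 0) (hbc : 0 < b * (a + b)) (hs : s ^ 2 = 1) :
    ∃ L : ℝ × ℝ →L[ℝ] ℝ × ℝ,
      HasFDerivAt (reducedField ε a b) L (asymmetricEquilibrium ε a b s) ∧
      (∀ v : ℝ × ℝ,
        L v = ((0 : ℝ) * v.1 + (-(s * 2 * ε)) * v.2,
          (-(s * 4 * b * ε / (a + b))) * v.1 + (2 * ε * (b - a) / (a + b)) * v.2)) ∧
      (0 : ℝ) * (2 * ε * (b - a) / (a + b)) -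
          (-(s * 2 * ε)) * (-(s * 4 * b * ε / (a + b))) = -(8 * b * ε ^ 2 / (a + b)) ∧
      -(8 * b * ε ^ 2 / (a + b)) < 0 ∧
      ∃ μm μp : ℝ, μm < 0 ∧ 0 < μp ∧
        μm ^ 2 - (2 * ε * (b - a) / (a + b)) * μm + (-(8 * b * ε ^ 2 / (a + b))) = 0 ∧
        μp ^ 2 - (2 * ε * (b - a) / (a + b)) * μp + (-(8 * b * ε ^ 2 / (a + b))) = 0 := by
  have hc : a + b ≠ 0 := right_ne_zero_of_mul hbc.ne'
  have hdet_neg : -(8 * b * ε ^ 2 / (a + b)) < 0 := by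
    have hratio : 0 < b / (a + b) := div_pos_iff.2 (mul_pos_iff.1 hbc)
    calc -(8 * b * ε ^ 2 / (a + b)) = -(8 * ε ^ 2 * (b / (a + b))) := by ring
      _ < 0 := neg_lt_zero.2 (by positivity)
  have hJ := reducedJacobian_asymmetricEquilibrium ε s hc
  have hdet := det_reducedJacobian_asymmetricEquilibrium ε hc hs
  have hderiv := hasFDerivAt_reducedField ε a b (asymmetricEquilibrium ε a b s)
  rw [hJ] at hdet hderiv
  exact ⟨_, hderiv, toLin_finTwoProd_apply _ _ _ _, (det_fin_two_of ..).symm.trans hdet, hdet_neg,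
    exists_neg_root_and_pos_root_of_const_neg _ hdet_neg⟩

/-- For `ε, a, b > 0` and `c = a + b`, the reduced planar vector field
`F(γ, A) = (2(ε - cA)γ, 2((ε - aA)A - bγ²))` is differentiable at each equilibrium
`(±ε/c, ε/c)` (sign `s = ±1`), with Jacobian matrix `[[0, ∓2ε], [∓4bε/c, 2ε(b-a)/c]]`
whose determinant is `-8bε²/c < 0`; hence the linearization has two real eigenvalues
`μ₋ < 0 < μ₊` (roots of the characteristic polynomial), i.e. these equilibria are
saddle points. -/
theorem stmt_19 (ε a b : ℝ) (hε : 0 < ε) (ha : 0 < a) (hb : 0 < b) :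
    ∀ s : ℝ, s = 1 ∨ s = -1 →
      ∃ L : ℝ × ℝ →L[ℝ] ℝ × ℝ,
        HasFDerivAt (fun p : ℝ × ℝ =>
            ((2 * (ε - (a + b) * p.2) * p.1,
              2 * ((ε - a * p.2) * p.2 - b * p.1 ^ 2)) : ℝ × ℝ))
          L (s * ε / (a + b), ε / (a + b)) ∧
        (∀ v : ℝ × ℝ,
          L v = ((0 : ℝ) * v.1 + (-(s * 2 * ε)) * v.2,
            (-(s * 4 * b * ε / (a + b))) * v.1 + (2 * ε * (b - a) / (a + b)) * v.2)) ∧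
        (0 : ℝ) * (2 * ε * (b - a) / (a + b)) -
            (-(s * 2 * ε)) * (-(s * 4 * b * ε / (a + b))) = -(8 * b * ε ^ 2 / (a + b)) ∧
        -(8 * b * ε ^ 2 / (a + b)) < 0 ∧
        ∃ μm μp : ℝ, μm < 0 ∧ 0 < μp ∧
          μm ^ 2 - (2 * ε * (b - a) / (a + b)) * μm + (-(8 * b * ε ^ 2 / (a + b))) = 0 ∧
          μp ^ 2 - (2 * ε * (b - a) / (a + b)) * μp + (-(8 * b * ε ^ 2 / (a + b))) = 0 :=
  fun _ hs ↦ stmt_19_general hε.ne' (by positivity) (sq_eq_one_iff.2 hs)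
end
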